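/- Let u : ℝ² → ℝ be a smooth function of (t,x), set m = u − u_xx, and suppose that at every point m_t − 2 u u_x m + ∂_x( (u² − 3u_x²) m ) = 0. Define Φ = ( u³ − u u_x² − (u² − 3u_x²) m + u_tx )² − ( u² u_x − u_x³ + u_t )². Then ∂_x Φ = 0 at every point; that is, this multi-peakon equation admits a purely spatial conservation law. -/

import Mathlib

open Real

noncomputable section

/-- Partial derivative in the first (time) variable. -/
def pt (f : ℝ → ℝ → ℝ) (t x : ℝ) : ℝ := deriv (fun s => f s x) t

/-- Partial derivative in the second (space) variable. -/
def px (f : ℝ → ℝ → ℝ) (t x : ℝ) : ℝ := deriv (fun y => f t y) x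

/-- The momentum variable `m = u - u_xx`. -/
def mf (u : ℝ → ℝ → ℝ) (t x : ℝ) : ℝ := u t x - px (px u) t x

theorem hasFDeriv_px (f : ℝ → ℝ → ℝ) (hf : ContDiff ℝ (⊤ : ℕ∞) (Function.uncurry f)) (t x : ℝ) :
    HasDerivAt (fun y => f t y) (fderiv ℝ (Function.uncurry f) (t, x) (0, 1)) x := by
  have h := (hf.differentiable (by simp) (t, x)).hasFDerivAt
  exact h.comp_hasDerivAt (f := fun y : ℝ => (t, y)) x
    ((hasDerivAt_const x t).prodMk (hasDerivAt_id x))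

theorem hasFDeriv_pt (f : ℝ → ℝ → ℝ) (hf : ContDiff ℝ (⊤ : ℕ∞) (Function.uncurry f)) (t x : ℝ) :
    HasDerivAt (fun s => f s x) (fderiv ℝ (Function.uncurry f) (t, x) (1, 0)) t := by
  have h := (hf.differentiable (by simp) (t, x)).hasFDerivAt
  exact h.comp_hasDerivAt (f := fun y : ℝ => (y, x)) t
    ((hasDerivAt_id t).prodMk (hasDerivAt_const t x))

theorem px_unc (f : ℝ → ℝ → ℝ) (hf : ContDiff ℝ (⊤ : ℕ∞) (Function.uncurry f)) :
    Function.uncurry (px f) = fun p => fderiv ℝ (Function.uncurry f) p (0, 1) := by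
  funext ⟨t, x⟩
  exact (hasFDeriv_px f hf t x).deriv

theorem pt_unc (f : ℝ → ℝ → ℝ) (hf : ContDiff ℝ (⊤ : ℕ∞) (Function.uncurry f)) :
    Function.uncurry (pt f) = fun p => fderiv ℝ (Function.uncurry f) p (1, 0) := by
  funext ⟨t, x⟩
  exact (hasFDeriv_pt f hf t x).deriv

theorem px_smooth (f : ℝ → ℝ → ℝ) (hf : ContDiff ℝ (⊤ : ℕ∞) (Function.uncurry f)) :
    ContDiff ℝ (⊤ : ℕ∞) (Function.uncurry (px f)) := by
  rw [px_unc f hf]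
  exact (hf.fderiv_right (m := (⊤ : ℕ∞)) (by simp)).clm_apply contDiff_const

theorem pt_smooth (f : ℝ → ℝ → ℝ) (hf : ContDiff ℝ (⊤ : ℕ∞) (Function.uncurry f)) :
    ContDiff ℝ (⊤ : ℕ∞) (Function.uncurry (pt f)) := by
  rw [pt_unc f hf]
  exact (hf.fderiv_right (m := (⊤ : ℕ∞)) (by simp)).clm_apply contDiff_const

theorem px_has (f : ℝ → ℝ → ℝ) (hf : ContDiff ℝ (⊤ : ℕ∞) (Function.uncurry f)) (t x : ℝ) :
    HasDerivAt (fun y => f t y) (px f t x) x :=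
  (hasFDeriv_px f hf t x).differentiableAt.hasDerivAt

theorem pt_has (f : ℝ → ℝ → ℝ) (hf : ContDiff ℝ (⊤ : ℕ∞) (Function.uncurry f)) (t x : ℝ) :
    HasDerivAt (fun s => f s x) (pt f t x) t :=
  (hasFDeriv_pt f hf t x).differentiableAt.hasDerivAt

theorem px_pt_comm (f : ℝ → ℝ → ℝ) (hf : ContDiff ℝ (⊤ : ℕ∞) (Function.uncurry f)) (t x : ℝ) :
    px (pt f) t x = pt (px f) t x := by
  have h1 : px (pt f) t x = _ := (hasFDeriv_px _ (pt_smooth f hf) t x).deriv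
  have h2 : pt (px f) t x = _ := (hasFDeriv_pt _ (px_smooth f hf) t x).deriv
  have hd : DifferentiableAt ℝ (fderiv ℝ (Function.uncurry f)) (t, x) :=
    (hf.fderiv_right (m := (⊤ : ℕ∞)) (by simp)).differentiable (by simp) (t, x)
  have hs : IsSymmSndFDerivAt ℝ (Function.uncurry f) (t, x) :=
    hf.contDiffAt.isSymmSndFDerivAt (by simp; exact WithTop.coe_le_coe.2 (le_top : (2 : ℕ∞) ≤ ⊤))
  rw [h1, h2, px_unc f hf, pt_unc f hf, fderiv_clm_apply hd (by fun_prop),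
    fderiv_clm_apply hd (by fun_prop)]
  simpa using hs (0, 1) (1, 0)

/-- a purely spatial conservation law for the equation
`m_t - 2 u u_x m + ∂_x((u² - 3u_x²) m) = 0`. -/
theorem purely_spatial_conservation_law
    (u : ℝ → ℝ → ℝ) (hu : ContDiff ℝ (⊤ : ℕ∞) (Function.uncurry u))
    (heq : ∀ t x : ℝ,
      pt (mf u) t x
        - 2 * u t x * px u t x * mf u t x
        + px (fun t' x' => ((u t' x')^2 - 3 * (px u t' x')^2) * mf u t' x') t x = 0) :
    ∀ t x : ℝ,
      px (fun t' x' =>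
          ((u t' x')^3 - u t' x' * (px u t' x')^2
              - ((u t' x')^2 - 3 * (px u t' x')^2) * mf u t' x'
              + pt (px u) t' x')^2
            - ((u t' x')^2 * px u t' x' - (px u t' x')^3 + pt u t' x')^2) t x = 0 := by
  intro t x
  have hx := px_smooth u hu
  have hxx := px_smooth _ hx
  have ht := pt_smooth u hu
  have htx := pt_smooth _ hx
  have c1 := px_pt_comm u hu t x
  have c2 := px_pt_comm _ hx t x
  have d0 := px_has u hu t x
  have d1 := px_has _ hx t x
  have d2 := px_has _ hxx t x
  have dt := px_has _ ht t x
  have dtx := px_has _ htx t x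
  have e : pt (mf u) t x = pt u t x - pt (px (px u)) t x :=
    ((pt_has u hu t x).sub (pt_has _ hxx t x)).deriv
  have dm : HasDerivAt (fun y => mf u t y) (px u t x - px (px (px u)) t x) x := d0.sub d2
  have dg := (((d0.pow 2).sub ((d1.pow 2).const_mul 3)).mul dm)
  have h := heq t x
  have hg : px (fun t' x' => ((u t' x')^2 - 3 * (px u t' x')^2) * mf u t' x') t x = _ := dg.deriv
  have dA := ((((d0.pow 3).sub (d0.mul (d1.pow 2))).sub dg).add dtx)
  have dB := ((((d0.pow 2).mul d1).sub (d1.pow 3)).add dt)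
  have dP := (dA.pow 2).sub (dB.pow 2)
  refine Eq.trans dP.deriv ?_
  rw [hg, e] at h
  rw [c1, c2]
  simp only [mf, Pi.add_apply, Pi.sub_apply, Pi.mul_apply, Pi.pow_apply] at h ⊢
  norm_num at h ⊢
  linear_combination (-2 * ((u t x)^3 - u t x * (px u t x)^2 - ((u t x)^2 - 3 * (px u t x)^2) * (u t x - px (px u) t x) + pt (px u) t x)) * h

end
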